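/- Let A, B ⊆ ℝ² be compact convex sets, each with nonempty interior, and let t ∈ ℝ². Then t lies on the frontier (topological boundary) of the no-fit polygon NFP_{AB} = A + (−B) if and only if A and the translate t + B are in contact, i.e., A ∩ (t + B) ≠ ∅ while interior(A) ∩ interior(t + B) = ∅. -/

import Mathlib

open Set
open scoped Pointwise

/-- Frontier of the no-fit polygon = contact positions: for compact convex plane sets `A`, `B`
with nonempty interior, `t` is on the frontier of `A + (-B)` iff `A` and `t +ᵥ B` touch
(they intersect but their interiors are disjoint). -/
theorem nfp_frontier_iff_contact (A B : Set (ℝ × ℝ)) (t : ℝ × ℝ)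
    (hAc : IsCompact A) (hAconv : Convex ℝ A) (hAint : (interior A).Nonempty)
    (hBc : IsCompact B) (hBconv : Convex ℝ B) (hBint : (interior B).Nonempty) :
    t ∈ frontier (A + -B) ↔
      (A ∩ (t +ᵥ B)).Nonempty ∧ interior A ∩ interior (t +ᵥ B) = ∅ := by
  have hint : interior (A + -B) = interior A + -interior B := by
    apply Subset.antisymm
    · have hC : IsOpen (interior A + -interior B) := isOpen_interior.add_right
      have hconv : Convex ℝ (interior A + -interior B) :=
        hAconv.interior.add hBconv.interior.neg
      have hne : (interior (interior A + -interior B)).Nonempty := by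
        rw [hC.interior_eq]
        exact hAint.add hBint.neg
      have hsub : A + -B ⊆ closure (interior A + -interior B) := by
        rintro _ ⟨a, ha, b, hb, rfl⟩
        have ha' : a ∈ closure (interior A) := by
          rw [hAconv.closure_interior_eq_closure_of_nonempty_interior hAint]
          exact subset_closure ha
        have hb' : -b ∈ closure (interior B) := by
          rw [hBconv.closure_interior_eq_closure_of_nonempty_interior hBint]
          exact subset_closure hb
        have h := map_mem_closure₂ (f := fun x y : ℝ × ℝ => x - y) (by fun_prop) ha' hb'
          (u := interior A + -interior B) (fun x hx y hy => by
            rw [sub_eq_add_neg]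
            exact Set.add_mem_add hx (Set.neg_mem_neg.2 hy))
        simpa using h
      have h := interior_mono hsub
      rwa [hconv.interior_closure_eq_interior_of_nonempty_interior hne, hC.interior_eq] at h
    · apply interior_maximal (Set.add_subset_add interior_subset
        (Set.neg_subset_neg.2 interior_subset)) isOpen_interior.add_right
  have key : ∀ S T : Set (ℝ × ℝ), t ∈ S + -T ↔ (S ∩ (t +ᵥ T)).Nonempty := by
    intro S T
    constructor
    · rintro ⟨a, ha, b, hb, rfl⟩
      exact ⟨a, ha, -b, hb, by simp⟩
    · rintro ⟨_, ha, b, hb, rfl⟩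
      exact ⟨_, ha, -b, Set.neg_mem_neg.2 hb, by simp⟩
  have hcl : IsClosed (A + -B) := (hAc.add hBc.neg).isClosed
  rw [hcl.frontier_eq, hint, mem_sdiff, key, key, interior_vadd, not_nonempty_iff_eq_empty]
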